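/- Let n ≥ 2, let k₁, …, kₙ be positive reals, and define N : ℂⁿ → ℝ by N(z) = π·Σ_{j=2}^{n} kⱼ|zⱼ|². Let a, b be positive reals with a + b = k₁, and let α > 0 and s > 0 satisfy s·k₁² < a·b·α. Let E := {z ∈ ℂⁿ : π·k₁|z₁|² + N(z) < α} (an open ellipsoid). Then there exist a smooth time-dependent function G : ℝ × ℂⁿ → ℝ and a compact set K ⊆ E with G t = 0 outside K for every t, together with a Hamiltonian flow b of G with b 0 = id, such that: (i) N(b t z) = N(z) for all t and z; and (ii) the image under b 1 of the set {z ∈ E : π·a|z₁|² + N(z) < s} is disjoint from the set {z ∈ E : π·b|z₁|² < s}. -/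

import Mathlib

open Real

open Set MeasureTheory Topology
open scoped NNReal

/-!
Over a level `ν` of `N`, the ellipsoid is a disk in the first coordinate plane, and the two sets to
be separated lie over two concentric disks whose areas add up to less than the area of the big one.
A Hamiltonian `H(t, z₁, N z)` preserves `N` and moves `z₁` by the planar Hamiltonian `H(t, ·, ν)`,
so it is enough to displace the first small disk from the second within the big one, smoothly in
`ν`.

Write a disk as the region between the graphs of `-f` and `f`, where `f` is its profile on the line.
The planar Hamiltonian `-y v(x)` generates the cotangent lift of the vector field `v`, so if the
flow of `v` transports the density `f` to `g`, then its lift carries the region under `f` to the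
region under `g`. Moser's vector fields on the line spread the first disk onto an initial segment
of the big disk, measured by area from the left, and move a final segment of the big disk onto the
second disk. The two segments are disjoint because their areas add up to less than the whole.
-/

section IntegralCurves

variable {E : Type*} [NormedAddCommGroup E] [NormedSpace ℝ E]

lemma exists_hasDerivAt_Ioo_of_lipschitzWith_of_norm_le [CompleteSpace E] {v : ℝ → E → E}
    {K C : ℝ≥0} (hlip : ∀ t, LipschitzWith K (v t)) (hcont : ∀ x, Continuous (v · x))
    (hbound : ∀ t x, ‖v t x‖ ≤ C) (x₀ : E) {T : ℝ} (hT : 0 ≤ T) :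
    ∃ γ : ℝ → E, γ 0 = x₀ ∧ ∀ t ∈ Ioo (-T) T, HasDerivAt γ (v t (γ t)) t := by
  have hpicard : IsPicardLindelof v (tmin := -T) (tmax := T) ⟨0, by simpa using hT⟩ x₀
      (C * T.toNNReal) 0 C K :=
    { lipschitzOnWith := fun t _ => (hlip t).lipschitzOnWith
      continuousOn := fun x _ => (hcont x).continuousOn
      norm_le := fun t _ x _ => hbound t x
      mul_max_le := by simp [hT] }
  obtain ⟨γ, hγ₀, hγ⟩ := hpicard.exists_eq_forall_mem_Icc_hasDerivWithinAt₀
  exact ⟨γ, hγ₀, fun t ht =>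
    (hγ t (Ioo_subset_Icc_self ht)).hasDerivAt (Icc_mem_nhds ht.1 ht.2)⟩

theorem exists_isIntegralCurve_of_lipschitzWith_of_norm_le [CompleteSpace E] {v : ℝ → E → E}
    {K C : ℝ≥0} (hlip : ∀ t, LipschitzWith K (v t)) (hcont : ∀ x, Continuous (v · x))
    (hbound : ∀ t x, ‖v t x‖ ≤ C) (x₀ : E) :
    ∃ γ : ℝ → E, γ 0 = x₀ ∧ IsIntegralCurve γ v := by
  choose γ hγ₀ hγ using fun T : ℝ≥0 =>
    exists_hasDerivAt_Ioo_of_lipschitzWith_of_norm_le hlip hcont hbound x₀ T.coe_nonneg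
  have eqOn_of_le {S T : ℝ≥0} (hST : S ≤ T) : EqOn (γ S) (γ T) (Ioo (-S : ℝ) S) := by
    intro t ht
    have hST' : (S : ℝ) ≤ T := hST
    exact ODE_solution_unique_of_mem_Ioo (s := fun _ => univ) (t₀ := 0)
      (fun t _ => (hlip t).lipschitzOnWith) (by constructor <;> linarith [ht.1, ht.2])
      (fun u hu => ⟨hγ S u hu, trivial⟩)
      (fun u hu => ⟨hγ T u ⟨by linarith [hu.1, hST'], by linarith [hu.2, hST']⟩, trivial⟩)
      ((hγ₀ S).trans (hγ₀ T).symm) ht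
  have mem_Ioo (t : ℝ) : t ∈ Ioo (-(‖t‖₊ + 1 : ℝ≥0) : ℝ) (‖t‖₊ + 1 : ℝ≥0) :=
    abs_lt.1 (by simp)
  refine ⟨fun t => γ (‖t‖₊ + 1) t, hγ₀ _, fun t => ?_⟩
  refine (hγ _ t (mem_Ioo t)).congr_of_eventuallyEq ?_
  filter_upwards [Ioo_mem_nhds (mem_Ioo t).1 (mem_Ioo t).2] with u hu
  obtain hle | hle := le_total (‖u‖₊ + 1) (‖t‖₊ + 1)
  · exact eqOn_of_le hle (mem_Ioo u)
  · exact (eqOn_of_le hle hu).symm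

lemma eq_left_of_hasDerivAt_zero_of_mem_isOpen {F : ℝ → E} {U : Set ℝ} {a b : ℝ}
    (hF : Continuous F) (hU : IsOpen U)
    (hderiv : ∀ t ∈ Icc a b, t ∈ U → HasDerivAt F 0 t)
    (hmem : ∀ t ∈ Icc a b, F t = F a → t ∈ U) :
    ∀ t ∈ Icc a b, F t = F a := by
  refine IsClosed.Icc_subset_of_forall_mem_nhdsWithin (s := {t | F t = F a})
    ((isClosed_eq hF continuous_const).inter isClosed_Icc) rfl ?_
  rintro t ⟨hFt, hat, htb⟩
  obtain ⟨c, htc, hc⟩ := mem_nhdsGE_iff_exists_Icc_subset.1 <| mem_nhdsWithin_of_mem_nhds <|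
    (hU.inter isOpen_Iio).mem_nhds ⟨hmem t ⟨hat, htb.le⟩ hFt, htb⟩
  filter_upwards [Ioc_mem_nhdsGT htc] with u hu
  have hconst := constant_of_has_deriv_right_zero hF.continuousOn (fun r hr =>
    (hderiv r ⟨hat.trans hr.1, (hc (Ico_subset_Icc_self hr)).2.le⟩
      (hc (Ico_subset_Icc_self hr)).1).hasDerivWithinAt) u (Ioc_subset_Icc_self hu)
  exact hconst.trans hFt

end IntegralCurves

section ParametricIntegral

variable {P E : Type*} [NormedAddCommGroup P] [NormedSpace ℝ P]
  [NormedAddCommGroup E] [NormedSpace ℝ E]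

/- The integral over `[0, 1]` is the value at `0` of the convolution of the indicator of `(0, 1]`
with `x ↦ f (p, -x)`, cut off away from `[-1, 0]`. -/
lemma contDiff_integral_zero_one {f : P × ℝ → E} {n : ℕ∞}
    (hf : ContDiff ℝ n f) :
    ContDiff ℝ n fun p => ∫ u in (0 : ℝ)..1, f (p, u) := by
  let χ : ContDiffBump (0 : ℝ) := ⟨2, 3, by norm_num, by norm_num⟩
  have hconv := contDiffOn_convolution_right_with_param (μ := volume) (n := n) (s := univ)
    (f := (Ioc (0 : ℝ) 1).indicator (1 : ℝ → ℝ)) (k := Metric.closedBall 0 3)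
    (g := fun (p : P) x => χ x • f (p, -x)) (ContinuousLinearMap.lsmul ℝ ℝ)
    isOpen_univ (isCompact_closedBall _ _)
    (fun p x _ hx => by
      rw [χ.zero_of_le_dist (not_le.1 hx).le, zero_smul])
    ((integrable_indicator_iff measurableSet_Ioc).2
      (integrableOn_const (by simp))).locallyIntegrable
    ((χ.contDiff.comp contDiff_snd).smul
      (hf.comp (contDiff_fst.prodMk contDiff_snd.neg))).contDiffOn
  rw [univ_prod_univ, contDiffOn_univ] at hconv
  convert hconv.comp (contDiff_prodMk_left (0 : ℝ)) using 1
  ext p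
  simp only [Function.comp, convolution, ContinuousLinearMap.lsmul_apply]
  rw [intervalIntegral.integral_of_le zero_le_one, ← integral_indicator measurableSet_Ioc]
  congr 1
  ext u
  by_cases hu : u ∈ Ioc (0 : ℝ) 1
  · have hχ : χ (-u) = 1 := χ.one_of_mem_closedBall <| by
      simpa [χ, abs_of_pos hu.1] using hu.2.trans one_le_two
    simp [hu, hχ]
  · simp [hu]

lemma contDiff_intervalIntegral {f : P × ℝ → E} {a b : P → ℝ} {n : ℕ∞}
    (hf : ContDiff ℝ n f) (ha : ContDiff ℝ n a) (hb : ContDiff ℝ n b) :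
    ContDiff ℝ n fun p => ∫ u in a p..b p, f (p, u) := by
  have hrescaled : ContDiff ℝ n fun q : P × ℝ => f (q.1, a q.1 + (b q.1 - a q.1) * q.2) := by
    fun_prop
  convert (hb.sub ha).smul (contDiff_integral_zero_one hrescaled) using 1
  ext p
  simp [intervalIntegral.smul_integral_comp_add_mul (fun u => f (p, u))]

end ParametricIntegral

section MoserInterpolation

/-- The density of the interpolation `(1 - τ) f + τ g` between two densities on the line. -/
noncomputable def interpDensity (f g : ℝ → ℝ) (τ x : ℝ) : ℝ :=
  (1 - τ) * f x + τ * g x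

/-- The signed mass of the interpolated density between the anchor `e` and `x`. -/
noncomputable def interpMass (f g : ℝ → ℝ) (e τ x : ℝ) : ℝ :=
  ∫ u in e..x, interpDensity f g τ u

/-- The Moser vector field on the line: its flow transports the density `f` to the density `g`
through the interpolated densities, and fixes the anchor `e`. -/
noncomputable def moserVelocity (f g : ℝ → ℝ) (e τ x : ℝ) : ℝ :=
  (∫ u in e..x, (f u - g u)) / interpDensity f g τ x

/-- The planar curve `(X, Y)` has at time `t` the velocity prescribed by the cotangent lift
`(v x, -y v'(x))` of the vector field `v` on the line. -/
structure FollowsCotangentLift (v X Y : ℝ → ℝ) (t : ℝ) : Prop where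
  hasDerivAt_fst : HasDerivAt X (v (X t)) t
  hasDerivAt_snd : HasDerivAt Y (-(Y t * deriv v (X t))) t

/-- The planar region between the graphs of `-f` and `f` over the interval `(-L, L)`. -/
def profileRegion (L : ℝ) (f : ℝ → ℝ) : Set (ℝ × ℝ) :=
  {p | |p.1| < L ∧ |p.2| < f p.1}

variable {f g : ℝ → ℝ} {τ : ℝ}

lemma interpDensity_pos (hf : ∀ x, 0 < f x) (hg : ∀ x, 0 < g x) (hτ : τ ∈ Icc (0 : ℝ) 1)
    (x : ℝ) : 0 < interpDensity f g τ x :=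
  convex_Ioi (0 : ℝ) (hf x) (hg x) (sub_nonneg.2 hτ.2) hτ.1 (by ring)

lemma le_interpDensity (hfg : f ≤ g) (hτ : 0 ≤ τ) (x : ℝ) : f x ≤ interpDensity f g τ x := by
  unfold interpDensity
  nlinarith [hfg x]

lemma interpDensity_le (hfg : f ≤ g) (hτ : τ ≤ 1) (x : ℝ) : interpDensity f g τ x ≤ g x := by
  unfold interpDensity
  nlinarith [hfg x]

lemma interpMass_eq (hf : Continuous f) (hg : Continuous g) (e τ x : ℝ) :
    interpMass f g e τ x = (1 - τ) * (∫ u in e..x, f u) + τ * ∫ u in e..x, g u := by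
  simp only [interpMass, interpDensity]
  rw [intervalIntegral.integral_add ((hf.const_mul _).intervalIntegrable _ _)
    ((hg.const_mul _).intervalIntegrable _ _), intervalIntegral.integral_const_mul,
    intervalIntegral.integral_const_mul]

lemma continuous_interpDensity (hf : Continuous f) (hg : Continuous g) :
    Continuous fun p : ℝ × ℝ => interpDensity f g p.1 p.2 := by
  unfold interpDensity
  fun_prop

lemma continuous_interpMass (hf : Continuous f) (hg : Continuous g) (e : ℝ) :
    Continuous fun p : ℝ × ℝ => interpMass f g e p.1 p.2 := by
  have hF : Continuous fun x => ∫ u in e..x, f u :=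
    intervalIntegral.continuous_primitive hf.intervalIntegrable e
  have hG : Continuous fun x => ∫ u in e..x, g u :=
    intervalIntegral.continuous_primitive hg.intervalIntegrable e
  simp only [interpMass_eq hf hg]
  exact ((continuous_const.sub continuous_fst).mul (hF.comp continuous_snd)).add
    (continuous_fst.mul (hG.comp continuous_snd))

lemma integral_le_interpMass (hf : Continuous f) (hg : Continuous g) (hfg : f ≤ g)
    (hτ : 0 ≤ τ) {e x : ℝ} (hx : e ≤ x) : ∫ u in e..x, f u ≤ interpMass f g e τ x := by
  have hD : Continuous (interpDensity f g τ) :=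
    (continuous_interpDensity hf hg).comp (Continuous.prodMk_right τ)
  exact intervalIntegral.integral_mono hx (hf.intervalIntegrable _ _)
    (hD.intervalIntegrable _ _) (le_interpDensity hfg hτ)

lemma interpMass_le_integral (hf : Continuous f) (hg : Continuous g) (hfg : f ≤ g)
    (hτ : 0 ≤ τ) {e x : ℝ} (hx : x ≤ e) : interpMass f g e τ x ≤ ∫ u in e..x, f u := by
  rw [interpMass, intervalIntegral.integral_symm x e, intervalIntegral.integral_symm x e]
  exact neg_le_neg (integral_le_interpMass hf hg hfg hτ hx)

lemma strictMono_integral_of_pos (hf : Continuous f) (hpos : ∀ x, 0 < f x) (e : ℝ) :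
    StrictMono fun x => ∫ u in e..x, f u :=
  strictMono_of_deriv_pos fun x => by rw [hf.deriv_integral]; exact hpos x

lemma abs_lt_of_interpMass_eq_integral (hf : Continuous f) (hg : Continuous g)
    (hpos : ∀ x, 0 < f x) (hfg : f ≤ g) {e L : ℝ} (he : e ∈ Icc (-L) L) (hτ : 0 ≤ τ)
    {x y : ℝ} (hy : |y| < L) (h : interpMass f g e τ x = ∫ u in e..y, f u) : |x| < L := by
  have hmono := strictMono_integral_of_pos hf hpos e
  rw [abs_lt] at hy ⊢
  constructor
  · by_contra! hx
    have hle := interpMass_le_integral hf hg hfg hτ (hx.trans he.1)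
    have hlt := hmono (hx.trans_lt hy.1)
    exact (hle.trans_lt hlt).ne h
  · by_contra! hx
    have hle := integral_le_interpMass hf hg hfg hτ (he.2.trans hx)
    have hlt := hmono (hy.2.trans_le hx)
    exact (hlt.trans_le hle).ne' h

variable {σ X Y : ℝ → ℝ} {e t σ' : ℝ}

lemma hasDerivAt_interpMass_comp (hf : Continuous f) (hg : Continuous g)
    (hD : interpDensity f g (σ t) (X t) ≠ 0) (hσ : HasDerivAt σ σ' t)
    (hX : HasDerivAt X (σ' * moserVelocity f g e (σ t) (X t)) t) :
    HasDerivAt (fun s => interpMass f g e (σ s) (X s)) 0 t := by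
  have hF := (hf.integral_hasStrictDerivAt e (X t)).hasDerivAt.comp t hX
  have hG := (hg.integral_hasStrictDerivAt e (X t)).hasDerivAt.comp t hX
  have hsub : ∫ u in e..X t, (f u - g u) = (∫ u in e..X t, f u) - ∫ u in e..X t, g u :=
    intervalIntegral.integral_sub (hf.intervalIntegrable _ _) (hg.intervalIntegrable _ _)
  have hcancel : interpDensity f g (σ t) (X t) * moserVelocity f g e (σ t) (X t) =
      (∫ u in e..X t, f u) - ∫ u in e..X t, g u := by
    rw [moserVelocity, mul_div_cancel₀ _ hD, hsub]
  simp only [interpMass_eq hf hg]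
  refine (((hσ.const_sub 1).mul hF).add (hσ.mul hG)).congr_deriv ?_
  simp only [Function.comp, interpDensity] at hcancel ⊢
  linear_combination σ' * hcancel

lemma hasDerivAt_interpDensity {f' g' x : ℝ} (hf : HasDerivAt f f' x) (hg : HasDerivAt g g' x)
    (τ : ℝ) : HasDerivAt (interpDensity f g τ) (interpDensity (fun _ => f') (fun _ => g') τ x) x :=
  (hf.const_mul (1 - τ)).add (hg.const_mul τ)

lemma hasDerivAt_moserVelocity {x : ℝ} (hf : Differentiable ℝ f) (hg : Differentiable ℝ g)
    (hD : interpDensity f g τ x ≠ 0) :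
    HasDerivAt (moserVelocity f g e τ) ((f x - g x - moserVelocity f g e τ x *
      interpDensity (fun _ => deriv f x) (fun _ => deriv g x) τ x) / interpDensity f g τ x) x := by
  have hnum := ((hf.continuous.sub hg.continuous).integral_hasStrictDerivAt e x).hasDerivAt
  have hden := hasDerivAt_interpDensity (hf x).hasDerivAt (hg x).hasDerivAt τ
  refine (hnum.div hden hD).congr_deriv ?_
  simp only [moserVelocity, Pi.sub_apply]
  field_simp

lemma hasDerivAt_div_interpDensity_comp (hf : Differentiable ℝ f) (hg : Differentiable ℝ g)
    (hD : interpDensity f g (σ t) (X t) ≠ 0) (hσ : HasDerivAt σ σ' t)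
    (h : FollowsCotangentLift (fun x => σ' * moserVelocity f g e (σ t) x) X Y t) :
    HasDerivAt (fun s => Y s / interpDensity f g (σ s) (X s)) 0 t := by
  obtain ⟨hX, hY⟩ := h
  have hF := (hf (X t)).hasDerivAt.comp t hX
  have hG := (hg (X t)).hasDerivAt.comp t hX
  have hden : HasDerivAt (fun s => interpDensity f g (σ s) (X s)) _ t :=
    ((hσ.const_sub 1).mul hF).add (hσ.mul hG)
  rw [((hasDerivAt_moserVelocity hf hg hD).const_mul σ').deriv] at hY
  refine (hY.div hden hD).congr_deriv ?_
  rw [div_eq_zero_iff]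
  left
  simp only [Function.comp]
  field_simp
  simp only [interpDensity]
  ring

lemma mem_profileRegion_of_interpMass_eq_integral (hf : Continuous f) (hg : Continuous g)
    (hpos : ∀ x, 0 < f x) (hfg : f ≤ g) {L : ℝ} (he : e ∈ Icc (-L) L) (hτ : τ ∈ Icc (0 : ℝ) 1)
    {x y x₀ y₀ : ℝ} (hmem : (x₀, y₀) ∈ profileRegion L f)
    (hmass : interpMass f g e τ x = ∫ u in e..x₀, f u)
    (hratio : y / interpDensity f g τ x = y₀ / f x₀) : (x, y) ∈ profileRegion L g := by
  have hD := interpDensity_pos hpos (fun x => (hpos x).trans_le (hfg x)) hτ x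
  have hlt : |y / interpDensity f g τ x| < 1 := by
    rw [hratio, abs_div, abs_of_pos (hpos _), div_lt_one (hpos _)]
    exact hmem.2
  rw [abs_div, abs_of_pos hD, div_lt_one hD] at hlt
  exact ⟨abs_lt_of_interpMass_eq_integral hf hg hpos hfg he hτ.1 hmem.1 hmass,
    hlt.trans_le (interpDensity_le hfg hτ.2 x)⟩

theorem interpMass_eq_integral_of_followsCotangentLift (hf : Differentiable ℝ f)
    (hg : Differentiable ℝ g) (hpos : ∀ x, 0 < f x) (hfg : f ≤ g) {L : ℝ}
    (he : e ∈ Icc (-L) L) (hσ : Differentiable ℝ σ) (hσ₀ : σ 0 = 0)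
    (hσ_mem : ∀ t, σ t ∈ Icc (0 : ℝ) 1) (hX : Continuous X) (hY : Continuous Y) {T : ℝ}
    (hfollow : ∀ t ∈ Icc 0 T, (X t, Y t) ∈ profileRegion L g →
      FollowsCotangentLift (fun x => deriv σ t * moserVelocity f g e (σ t) x) X Y t)
    (hinit : (X 0, Y 0) ∈ profileRegion L f) :
    ∀ t ∈ Icc 0 T, interpMass f g e (σ t) (X t) = ∫ u in e..X 0, f u := by
  have hfc := hf.continuous
  have hgc := hg.continuous
  have hσc := hσ.continuous
  have hD_pos (s) : 0 < interpDensity f g (σ s) (X s) :=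
    interpDensity_pos hpos (fun x => (hpos x).trans_le (hfg x)) (hσ_mem s) _
  let F (s : ℝ) : ℝ × ℝ :=
    (interpMass f g e (σ s) (X s), Y s / interpDensity f g (σ s) (X s))
  have hF_zero : F 0 = (∫ u in e..X 0, f u, Y 0 / f (X 0)) := by
    simp [F, interpMass, interpDensity, hσ₀]
  have hF_cont : Continuous F :=
    ((continuous_interpMass hfc hgc e).comp (hσc.prodMk hX)).prodMk <|
      hY.div ((continuous_interpDensity hfc hgc).comp (hσc.prodMk hX)) fun s => (hD_pos s).ne'
  have hF_deriv (s) (hs : s ∈ Icc 0 T) (hmem : (X s, Y s) ∈ profileRegion L g) :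
      HasDerivAt F 0 s :=
    (hasDerivAt_interpMass_comp hfc hgc (hD_pos s).ne' (hσ s).hasDerivAt
      (hfollow s hs hmem).hasDerivAt_fst).prodMk
    (hasDerivAt_div_interpDensity_comp hf hg (hD_pos s).ne' (hσ s).hasDerivAt
      (hfollow s hs hmem))
  have hF_mem (s) (hs : F s = F 0) : (X s, Y s) ∈ profileRegion L g := by
    obtain ⟨hmass, hratio⟩ := Prod.ext_iff.1 (hs.trans hF_zero)
    exact mem_profileRegion_of_interpMass_eq_integral hfc hgc hpos hfg he (hσ_mem s) hinit
      hmass hratio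
  have hopen : IsOpen {s | (X s, Y s) ∈ profileRegion L g} :=
    (isOpen_lt hX.abs continuous_const).inter (isOpen_lt hY.abs (hgc.comp hX))
  intro s hs
  exact (Prod.ext_iff.1 ((eq_left_of_hasDerivAt_zero_of_mem_isOpen hF_cont hopen hF_deriv
    (fun s _ => hF_mem s) s hs).trans hF_zero)).1

end MoserInterpolation

section PlanarDisplacement

/-- A smooth step which runs from `0` to `1` during the time interval `[0, 1/2]`. -/
noncomputable def halfTimeStep (t : ℝ) : ℝ :=
  smoothTransition (2 * t)

lemma contDiff_halfTimeStep {n : ℕ∞} : ContDiff ℝ n halfTimeStep :=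
  smoothTransition.contDiff.comp (contDiff_const.mul contDiff_id)

lemma differentiable_halfTimeStep : Differentiable ℝ halfTimeStep :=
  contDiff_halfTimeStep.differentiable (n := 1) one_ne_zero

lemma contDiff_deriv_halfTimeStep {n : ℕ∞} : ContDiff ℝ n (deriv halfTimeStep) :=
  ((contDiff_infty_iff_deriv.1 contDiff_halfTimeStep).2).of_le (mod_cast le_top)

lemma halfTimeStep_mem_Icc (t : ℝ) : halfTimeStep t ∈ Icc (0 : ℝ) 1 :=
  ⟨smoothTransition.nonneg _, smoothTransition.le_one _⟩

lemma halfTimeStep_of_nonpos {t : ℝ} (ht : t ≤ 0) : halfTimeStep t = 0 :=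
  smoothTransition.zero_of_nonpos (by linarith)

lemma halfTimeStep_of_half_le {t : ℝ} (ht : 1 / 2 ≤ t) : halfTimeStep t = 1 :=
  smoothTransition.one_of_one_le (by linarith)

lemma deriv_halfTimeStep_of_nonpos {t : ℝ} (ht : t ≤ 0) : deriv halfTimeStep t = 0 :=
  IsLocalMin.deriv_eq_zero <| Filter.Eventually.of_forall fun s =>
    (halfTimeStep_of_nonpos ht).trans_le (halfTimeStep_mem_Icc s).1

lemma deriv_halfTimeStep_of_half_le {t : ℝ} (ht : 1 / 2 ≤ t) : deriv halfTimeStep t = 0 :=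
  IsLocalMax.deriv_eq_zero <| Filter.Eventually.of_forall fun s =>
    (halfTimeStep_mem_Icc s).2.trans_eq (halfTimeStep_of_half_le ht).symm

/-- The vector field on the line which spreads `p` to `h` from the anchor `e` during `[0, 1/2]`
and then shrinks `h` to `q` towards the opposite anchor `-e` during `[1/2, 1]`. -/
noncomputable def displacingVelocity (p q h : ℝ → ℝ) (e t x : ℝ) : ℝ :=
  deriv halfTimeStep t * moserVelocity p h e (halfTimeStep t) x -
    deriv halfTimeStep (1 - t) * moserVelocity q h (-e) (halfTimeStep (1 - t)) x

variable {p q h : ℝ → ℝ} {e : ℝ}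

lemma displacingVelocity_of_notMem {t : ℝ} (ht : t ∉ Icc (0 : ℝ) 1) (x : ℝ) :
    displacingVelocity p q h e t x = 0 := by
  have hderiv {s : ℝ} (hs : s ∉ Icc (0 : ℝ) 1) : deriv halfTimeStep s = 0 := by
    rcases le_or_gt s 0 with hs₀ | hs₀
    · exact deriv_halfTimeStep_of_nonpos hs₀
    · refine deriv_halfTimeStep_of_half_le ?_
      have : 1 < s := not_le.1 fun hs₁ => hs ⟨hs₀.le, hs₁⟩
      linarith
  have ht' : 1 - t ∉ Icc (0 : ℝ) 1 := fun h' => ht ⟨by linarith [h'.2], by linarith [h'.1]⟩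
  simp [displacingVelocity, hderiv ht, hderiv ht']

lemma displacingVelocity_swap (p q h : ℝ → ℝ) (e t : ℝ) :
    displacingVelocity q p h (-e) t = -displacingVelocity p q h e (1 - t) := by
  ext x
  simp only [displacingVelocity, Pi.neg_apply, neg_neg, sub_sub_cancel, neg_sub]

lemma displacingVelocity_of_le_half {t : ℝ} (ht : t ≤ 1 / 2) :
    displacingVelocity p q h e t =
      fun x => deriv halfTimeStep t * moserVelocity p h e (halfTimeStep t) x := by
  ext x
  simp [displacingVelocity, deriv_halfTimeStep_of_half_le (show 1 / 2 ≤ 1 - t by linarith)]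

lemma FollowsCotangentLift.comp_const_sub {v X Y : ℝ → ℝ} {c t : ℝ}
    (hfollow : FollowsCotangentLift v X Y (c - t)) :
    FollowsCotangentLift (-v) (fun s => X (c - s)) (fun s => Y (c - s)) t where
  hasDerivAt_fst := hfollow.hasDerivAt_fst.comp_const_sub c t
  hasDerivAt_snd := by
    have hY := hfollow.hasDerivAt_snd.comp_const_sub c t
    simpa [deriv.neg] using hY

lemma integral_half_time_eq (hp : Differentiable ℝ p) (hh : Differentiable ℝ h)
    (hpos : ∀ x, 0 < p x) (hph : p ≤ h) {L : ℝ} (he : e ∈ Icc (-L) L) {X Y : ℝ → ℝ}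
    (hX : Continuous X) (hY : Continuous Y)
    (hfollow : ∀ t ∈ Icc (0 : ℝ) 1, (X t, Y t) ∈ profileRegion L h →
      FollowsCotangentLift (displacingVelocity p q h e t) X Y t)
    (hinit : (X 0, Y 0) ∈ profileRegion L p) :
    ∫ u in e..X (1 / 2), h u = ∫ u in e..X 0, p u := by
  have hmass := interpMass_eq_integral_of_followsCotangentLift hp hh hpos hph he
    differentiable_halfTimeStep (halfTimeStep_of_nonpos le_rfl) halfTimeStep_mem_Icc hX hY
    (fun t ht hmem => by
      rw [← displacingVelocity_of_le_half (q := q) ht.2]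
      exact hfollow t ⟨ht.1, ht.2.trans (by norm_num)⟩ hmem)
    hinit (1 / 2) (by norm_num)
  rw [halfTimeStep_of_half_le le_rfl] at hmass
  simpa [interpMass, interpDensity] using hmass

/- Had the curve ended over `q`, then the part of `h` left of its position at half time would have
the mass of the part of `p` left of its start, and the part of `h` right of it the mass of the part
of `q` right of its end. -/
theorem notMem_profileRegion_of_followsCotangentLift (hp : Differentiable ℝ p)
    (hq : Differentiable ℝ q) (hh : Differentiable ℝ h) (hp_pos : ∀ x, 0 < p x)
    (hq_pos : ∀ x, 0 < q x) (hph : p ≤ h) (hqh : q ≤ h) {L : ℝ}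
    (hmass : (∫ u in -L..L, p u) + (∫ u in -L..L, q u) ≤ ∫ u in -L..L, h u)
    {X Y : ℝ → ℝ} (hX : Continuous X) (hY : Continuous Y)
    (hfollow : ∀ t ∈ Icc (0 : ℝ) 1, (X t, Y t) ∈ profileRegion L h →
      FollowsCotangentLift (displacingVelocity p q h (-L) t) X Y t)
    (hinit : (X 0, Y 0) ∈ profileRegion L p) : (X 1, Y 1) ∉ profileRegion L q := by
  intro hfinal
  have hL : -L ≤ L := by linarith [abs_nonneg (X 0), hinit.1]
  have hleft := integral_half_time_eq hp hh hp_pos hph (left_mem_Icc.2 hL) hX hY hfollow hinit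
  have hright : ∫ u in L..X (1 / 2), h u = ∫ u in L..X 1, q u := by
    have hreverse := integral_half_time_eq (q := p) (X := fun t => X (1 - t))
      (Y := fun t => Y (1 - t)) hq hh hq_pos hqh (right_mem_Icc.2 hL) (by fun_prop) (by fun_prop)
      (fun t ht hmem => by
        rw [← neg_neg L, displacingVelocity_swap]
        exact (hfollow (1 - t) ⟨by linarith [ht.2], by linarith [ht.1]⟩ hmem).comp_const_sub)
      (by simpa using hfinal)
    simpa [show (1 : ℝ) - 2⁻¹ = 2⁻¹ by norm_num] using hreverse
  have hX₀ := strictMono_integral_of_pos hp.continuous hp_pos (-L) (abs_lt.1 hinit.1).2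
  have hX₁ := strictMono_integral_of_pos hq.continuous hq_pos L (abs_lt.1 hfinal.1).1
  have hsplit := intervalIntegral.integral_add_adjacent_intervals (μ := volume)
    (hh.continuous.intervalIntegrable (-L) (X (1 / 2)))
    (hh.continuous.intervalIntegrable (X (1 / 2)) L)
  rw [intervalIntegral.integral_symm L (X (1 / 2))] at hsplit
  simp only [intervalIntegral.integral_symm (-L) L] at hX₁
  linarith

end PlanarDisplacement

section SmoothDependence

variable {P : Type*} [NormedAddCommGroup P] [NormedSpace ℝ P] {n : ℕ∞}
  {e τ t x : P → ℝ}

lemma contDiff_moserVelocity {f g : P → ℝ → ℝ} (hf : ContDiff ℝ n fun a : P × ℝ => f a.1 a.2)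
    (hg : ContDiff ℝ n fun a : P × ℝ => g a.1 a.2) (hf_pos : ∀ a x, 0 < f a x)
    (hg_pos : ∀ a x, 0 < g a x) (he : ContDiff ℝ n e) (hτ : ContDiff ℝ n τ)
    (hτ_mem : ∀ a, τ a ∈ Icc (0 : ℝ) 1) (hx : ContDiff ℝ n x) :
    ContDiff ℝ n fun a => moserVelocity (f a) (g a) (e a) (τ a) (x a) := by
  have hfx : ContDiff ℝ n fun a => f a (x a) := hf.comp (contDiff_id.prodMk hx)
  have hgx : ContDiff ℝ n fun a => g a (x a) := hg.comp (contDiff_id.prodMk hx)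
  exact (contDiff_intervalIntegral (hf.sub hg) he hx).div
    (((contDiff_const.sub hτ).mul hfx).add (hτ.mul hgx))
    fun a => (interpDensity_pos (hf_pos a) (hg_pos a) (hτ_mem a) (x a)).ne'

lemma contDiff_displacingVelocity {p q h : P → ℝ → ℝ}
    (hp : ContDiff ℝ n fun a : P × ℝ => p a.1 a.2) (hq : ContDiff ℝ n fun a : P × ℝ => q a.1 a.2)
    (hh : ContDiff ℝ n fun a : P × ℝ => h a.1 a.2) (hp_pos : ∀ a x, 0 < p a x)
    (hq_pos : ∀ a x, 0 < q a x) (hh_pos : ∀ a x, 0 < h a x) (he : ContDiff ℝ n e)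
    (ht : ContDiff ℝ n t) (hx : ContDiff ℝ n x) :
    ContDiff ℝ n fun a => displacingVelocity (p a) (q a) (h a) (e a) (t a) (x a) := by
  have ht' : ContDiff ℝ n fun a => 1 - t a := contDiff_const.sub ht
  exact ((contDiff_deriv_halfTimeStep.comp ht).mul (contDiff_moserVelocity hp hh hp_pos hh_pos he
      (contDiff_halfTimeStep.comp ht) (fun _ => halfTimeStep_mem_Icc _) hx)).sub
    ((contDiff_deriv_halfTimeStep.comp ht').mul (contDiff_moserVelocity hq hh hq_pos hh_pos he.neg
      (contDiff_halfTimeStep.comp ht') (fun _ => halfTimeStep_mem_Icc _) hx))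

end SmoothDependence

section Profiles

/-- A smooth positive approximation from above of the positive part `max t 0`. -/
noncomputable def smoothPosPart (ε t : ℝ) : ℝ :=
  (t + √(t ^ 2 + ε ^ 2)) / 2

/-- A smooth positive approximation from above of the profile `√(c - x²)` of the disk of squared
radius `c`, defined on the whole line and for every real `c`. -/
noncomputable def diskProfile (ε c x : ℝ) : ℝ :=
  √(smoothPosPart ε (c - x ^ 2))

/-- The vector field on the line which displaces the smoothed disk of squared radius `c₁` from the
one of squared radius `c₂`, inside the smoothed disk of squared radius `c`. -/
noncomputable def diskDisplacingVelocity (ε c₁ c₂ c t x : ℝ) : ℝ :=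
  displacingVelocity (diskProfile ε c₁) (diskProfile ε c₂) (diskProfile ε c) (-diskProfile ε c 0)
    t x

variable {ε c d L : ℝ}

lemma abs_lt_sqrt_sq_add_sq (hε : 0 < ε) (t : ℝ) : |t| < √(t ^ 2 + ε ^ 2) := by
  rw [← sqrt_sq_eq_abs]
  exact sqrt_lt_sqrt (sq_nonneg t) (lt_add_of_pos_right _ (pow_pos hε 2))

lemma smoothPosPart_pos (hε : 0 < ε) (t : ℝ) : 0 < smoothPosPart ε t := by
  have := abs_lt.1 (abs_lt_sqrt_sq_add_sq hε t)
  unfold smoothPosPart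
  linarith

lemma le_smoothPosPart (ε t : ℝ) : t ≤ smoothPosPart ε t := by
  have : t ≤ √(t ^ 2 + ε ^ 2) := le_sqrt_of_sq_le (le_add_of_nonneg_right (sq_nonneg ε))
  unfold smoothPosPart
  linarith

lemma smoothPosPart_le (hε : 0 ≤ ε) (t : ℝ) : smoothPosPart ε t ≤ max t 0 + ε / 2 := by
  have : √(t ^ 2 + ε ^ 2) ≤ |t| + ε :=
    (sqrt_le_left (by positivity)).2 (by nlinarith [sq_abs t, abs_nonneg t])
  have := max_zero_add_max_neg_zero_eq_abs_self t
  have := max_zero_sub_max_neg_zero_eq_self t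
  unfold smoothPosPart
  linarith

lemma contDiff_smoothPosPart (hε : 0 < ε) {n : WithTop ℕ∞} : ContDiff ℝ n (smoothPosPart ε) :=
  ((contDiff_id.add (((contDiff_id.pow 2).add contDiff_const).sqrt fun t => by
    positivity)).div_const 2)

lemma strictMono_smoothPosPart (hε : 0 < ε) : StrictMono (smoothPosPart ε) := by
  refine strictMono_of_hasDerivAt_pos
    (f' := fun t => (1 + t / √(t ^ 2 + ε ^ 2)) / 2) (fun t => ?_) fun t => ?_
  · have hsqrt := (((hasDerivAt_id t).pow 2).add_const (ε ^ 2)).sqrt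
      (ne_of_gt (add_pos_of_nonneg_of_pos (sq_nonneg _) (pow_pos hε 2)))
    refine (((hasDerivAt_id t).add hsqrt).div_const 2).congr_deriv ?_
    simp only [id_eq, Pi.pow_apply, Nat.cast_ofNat, Nat.add_one_sub_one, pow_one, mul_one]
    field_simp
  · have hlt := abs_lt.1 (abs_lt_sqrt_sq_add_sq hε t)
    have : -1 < t / √(t ^ 2 + ε ^ 2) := by
      rw [lt_div_iff₀ (by positivity)]
      linarith
    linarith

lemma diskProfile_pos (hε : 0 < ε) (c x : ℝ) : 0 < diskProfile ε c x :=
  sqrt_pos.2 (smoothPosPart_pos hε _)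

lemma sq_diskProfile (hε : 0 < ε) (c x : ℝ) :
    diskProfile ε c x ^ 2 = smoothPosPart ε (c - x ^ 2) :=
  sq_sqrt (smoothPosPart_pos hε _).le

lemma monotone_diskProfile (hε : 0 < ε) : Monotone (diskProfile ε) := fun _ _ hcd _ =>
  sqrt_le_sqrt ((strictMono_smoothPosPart hε).monotone (by gcongr))

lemma sqrt_le_diskProfile (ε c x : ℝ) : √(c - x ^ 2) ≤ diskProfile ε c x :=
  sqrt_le_sqrt (le_smoothPosPart ε _)

lemma diskProfile_le (hε : 0 ≤ ε) (c x : ℝ) :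
    diskProfile ε c x ≤ √(c - x ^ 2) + √(ε / 2) := by
  have hmax : max (c - x ^ 2) 0 ≤ √(c - x ^ 2) ^ 2 :=
    max_le ((sqrt_le_left (sqrt_nonneg _)).1 le_rfl) (sq_nonneg _)
  have hε_sq : √(ε / 2) ^ 2 = ε / 2 := sq_sqrt (by positivity)
  refine sqrt_le_iff.2 ⟨by positivity, (smoothPosPart_le hε _).trans ?_⟩
  nlinarith [sqrt_nonneg (c - x ^ 2), sqrt_nonneg (ε / 2)]

lemma contDiff_diskProfile (hε : 0 < ε) {n : WithTop ℕ∞} :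
    ContDiff ℝ n fun p : ℝ × ℝ => diskProfile ε p.1 p.2 :=
  ((contDiff_smoothPosPart hε).comp (contDiff_fst.sub (contDiff_snd.pow 2))).sqrt
    fun _ => (smoothPosPart_pos hε _).ne'

lemma differentiable_diskProfile (hε : 0 < ε) (c : ℝ) : Differentiable ℝ (diskProfile ε c) :=
  ((contDiff_diskProfile hε (n := 1)).comp (contDiff_prodMk_right c)).differentiable one_ne_zero

lemma mem_profileRegion_of_sq_add_sq_lt {x y : ℝ} (hcd : c ≤ d) (hxy : x ^ 2 + y ^ 2 < c) :
    (x, y) ∈ profileRegion (diskProfile ε d 0) (diskProfile ε c) := by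
  constructor
  · refine (lt_sqrt_of_sq_lt ?_).trans_le (sqrt_le_diskProfile ε d 0)
    rw [sq_abs]
    nlinarith [sq_nonneg y]
  · refine (lt_sqrt_of_sq_lt ?_).trans_le (sqrt_le_diskProfile ε c x)
    rw [sq_abs]
    linarith

lemma sq_diskProfile_zero_le (hε : 0 < ε) (hc : 0 ≤ c) : diskProfile ε c 0 ^ 2 ≤ c + ε / 2 := by
  rw [sq_diskProfile hε]
  simpa [hc] using smoothPosPart_le hε.le c

lemma le_sq_diskProfile_zero (hε : 0 < ε) (c : ℝ) : c ≤ diskProfile ε c 0 ^ 2 := by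
  rw [sq_diskProfile hε]
  simpa using le_smoothPosPart ε c

lemma sq_add_sq_lt_of_mem_profileRegion (hε : 0 < ε) (hc : 0 ≤ c) {x y : ℝ}
    (hxy : (x, y) ∈ profileRegion (diskProfile ε c 0) (diskProfile ε c)) :
    x ^ 2 + y ^ 2 < c + ε := by
  have hx := (sq_lt_sq' (abs_lt.1 hxy.1).1 (abs_lt.1 hxy.1).2).trans_le
    (sq_diskProfile_zero_le hε hc)
  have hy := sq_lt_sq' (abs_lt.1 hxy.2).1 (abs_lt.1 hxy.2).2
  rw [sq_diskProfile hε] at hy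
  have hle := smoothPosPart_le hε.le (c - x ^ 2)
  rcases max_choice (c - x ^ 2) 0 with h | h <;> rw [h] at hle <;> dsimp only at * <;> linarith

lemma integral_sqrt_sq_sub_sq {r : ℝ} (hr : 0 ≤ r) :
    ∫ x in -r..r, √(r ^ 2 - x ^ 2) = π * r ^ 2 / 2 := by
  have hscale := intervalIntegral.smul_integral_comp_mul_left (a := -1) (b := 1)
    (fun x => √(r ^ 2 - x ^ 2)) r
  have hcomp (x : ℝ) : √(r ^ 2 - (r * x) ^ 2) = r * √(1 - x ^ 2) := by
    rw [show r ^ 2 - (r * x) ^ 2 = r ^ 2 * (1 - x ^ 2) by ring, sqrt_mul (sq_nonneg r),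
      sqrt_sq hr]
  simp only [hcomp, intervalIntegral.integral_const_mul, integral_sqrt_one_sub_sq, mul_neg,
    mul_one, smul_eq_mul] at hscale
  rw [← hscale]
  ring

lemma integral_sqrt_sub_sq (hc : 0 ≤ c) (hcL : c ≤ L ^ 2) (hL : 0 ≤ L) :
    ∫ x in -L..L, √(c - x ^ 2) = π * c / 2 := by
  have hrL : √c ≤ L := sqrt_le_iff.2 ⟨hL, hcL⟩
  have hsupp : Function.support (fun x => √(c - x ^ 2)) ⊆ Ioc (-√c) √c := by
    intro x hx
    have hlt : x ^ 2 < c := by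
      by_contra! hle
      exact hx (sqrt_eq_zero_of_nonpos (sub_nonpos.2 hle))
    exact ⟨neg_sqrt_lt_of_sq_lt hlt, (lt_sqrt_of_sq_lt hlt).le⟩
  rw [intervalIntegral.integral_eq_integral_of_support_subset
      (hsupp.trans (Ioc_subset_Ioc (neg_le_neg hrL) hrL)),
    ← intervalIntegral.integral_eq_integral_of_support_subset hsupp]
  simpa only [sq_sqrt hc] using integral_sqrt_sq_sub_sq (sqrt_nonneg c)

lemma le_integral_diskProfile (hε : 0 < ε) (hc : 0 ≤ c) (hcL : c ≤ L ^ 2) (hL : 0 ≤ L) :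
    π * c / 2 ≤ ∫ x in -L..L, diskProfile ε c x := by
  rw [← integral_sqrt_sub_sq hc hcL hL]
  exact intervalIntegral.integral_mono (by linarith)
    ((by fun_prop : Continuous fun x : ℝ => √(c - x ^ 2)).intervalIntegrable _ _)
    ((differentiable_diskProfile hε c).continuous.intervalIntegrable _ _)
    (sqrt_le_diskProfile ε c)

lemma integral_diskProfile_le (hε : 0 < ε) (hc : 0 ≤ c) (hcL : c ≤ L ^ 2) (hL : 0 ≤ L) :
    ∫ x in -L..L, diskProfile ε c x ≤ π * c / 2 + 2 * L * √(ε / 2) := by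
  have hcont : Continuous fun x : ℝ => √(c - x ^ 2) := by fun_prop
  calc ∫ x in -L..L, diskProfile ε c x
      ≤ ∫ x in -L..L, (√(c - x ^ 2) + √(ε / 2)) :=
        intervalIntegral.integral_mono (by linarith)
          ((differentiable_diskProfile hε c).continuous.intervalIntegrable _ _)
          ((hcont.add continuous_const).intervalIntegrable _ _) (diskProfile_le hε.le c)
    _ = π * c / 2 + 2 * L * √(ε / 2) := by
        rw [intervalIntegral.integral_add (hcont.intervalIntegrable _ _)
          (intervalIntegrable_const), integral_sqrt_sub_sq hc hcL hL,
          intervalIntegral.integral_const, smul_eq_mul]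
        ring

lemma exists_pos_mul_sqrt_le {A μ : ℝ} (hμ : 0 < μ) :
    ∃ ε > 0, 3 * ε < μ ∧ 4 * A * √(ε / 2) ≤ π / 2 * (μ - 3 * ε) := by
  have hgap : ∀ᶠ ε in 𝓝[>] (0 : ℝ), 0 < μ - 3 * ε :=
    nhdsWithin_le_nhds <| (by fun_prop : Continuous fun ε : ℝ => μ - 3 * ε).continuousAt.eventually
      (lt_mem_nhds (by simpa using hμ))
  have harea : ∀ᶠ ε in 𝓝[>] (0 : ℝ), 0 < π / 2 * (μ - 3 * ε) - 4 * A * √(ε / 2) :=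
    nhdsWithin_le_nhds <| (by fun_prop : Continuous fun ε : ℝ =>
      π / 2 * (μ - 3 * ε) - 4 * A * √(ε / 2)).continuousAt.eventually
      (lt_mem_nhds (by simpa using mul_pos pi_div_two_pos hμ))
  obtain ⟨ε, ⟨hε_gap, hε_area⟩, hε⟩ := ((hgap.and harea).and self_mem_nhdsWithin).exists
  exact ⟨ε, hε, by linarith, by linarith⟩

lemma exists_smoothing_scale (B : ℝ) {μ : ℝ} (hμ : 0 < μ) :
    ∃ ε > 0, ∀ c₁ c₂ c, 0 < c₁ → 0 < c₂ → c₁ + c₂ + μ ≤ c → c ≤ B →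
      c₁ ≤ c - 3 * ε ∧ c₂ ≤ c - 3 * ε ∧
      π / 2 * (c₁ + c₂) + 4 * diskProfile ε (c - 3 * ε) 0 * √(ε / 2) ≤ π / 2 * (c - 3 * ε) := by
  obtain ⟨ε, hε, hεμ, hε_area⟩ := exists_pos_mul_sqrt_le (A := √B) hμ
  refine ⟨ε, hε, fun c₁ c₂ c hc₁ hc₂ hc hcB => ⟨by linarith, by linarith, ?_⟩⟩
  have hprofile : diskProfile ε (c - 3 * ε) 0 ≤ √B :=
    le_sqrt_of_sq_le ((sq_diskProfile_zero_le hε (by linarith)).trans (by linarith))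
  have hsmoothing : 4 * diskProfile ε (c - 3 * ε) 0 * √(ε / 2) ≤ 4 * √B * √(ε / 2) := by gcongr
  nlinarith [pi_pos]

lemma contDiff_diskDisplacingVelocity {P : Type*} [NormedAddCommGroup P] [NormedSpace ℝ P]
    {n : ℕ∞} {c₁ c₂ c t x : P → ℝ} (hε : 0 < ε) (hc₁ : ContDiff ℝ n c₁) (hc₂ : ContDiff ℝ n c₂)
    (hc : ContDiff ℝ n c) (ht : ContDiff ℝ n t) (hx : ContDiff ℝ n x) :
    ContDiff ℝ n fun a => diskDisplacingVelocity ε (c₁ a) (c₂ a) (c a) (t a) (x a) := by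
  have hprofile {r : P → ℝ} (hr : ContDiff ℝ n r) :
      ContDiff ℝ n fun a : P × ℝ => diskProfile ε (r a.1) a.2 :=
    (contDiff_diskProfile hε).comp ((hr.comp contDiff_fst).prodMk contDiff_snd)
  exact contDiff_displacingVelocity (hprofile hc₁) (hprofile hc₂) (hprofile hc)
    (fun _ => diskProfile_pos hε _) (fun _ => diskProfile_pos hε _)
    (fun _ => diskProfile_pos hε _)
    ((contDiff_diskProfile hε).comp (hc.prodMk contDiff_const)).neg ht hx

theorem le_sq_add_sq_of_followsCotangentLift {c₁ c₂ : ℝ} (hε : 0 < ε) (hc₁ : c₁ ≤ c)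
    (hc₂ : c₂ ≤ c)
    (hgap : π / 2 * (c₁ + c₂) + 4 * diskProfile ε c 0 * √(ε / 2) ≤ π / 2 * c)
    {X Y : ℝ → ℝ} (hX : Continuous X) (hY : Continuous Y)
    (hfollow : ∀ t ∈ Icc (0 : ℝ) 1, X t ^ 2 + Y t ^ 2 < c + ε → FollowsCotangentLift
      (diskDisplacingVelocity ε c₁ c₂ c t) X Y t)
    (hinit : X 0 ^ 2 + Y 0 ^ 2 < c₁) : c₂ ≤ X 1 ^ 2 + Y 1 ^ 2 := by
  by_contra! hfinal
  have hc₁_pos : 0 < c₁ := hinit.trans_le' (by positivity)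
  have hc₂_pos : 0 < c₂ := hfinal.trans_le' (by positivity)
  have hc_pos : 0 < c := hc₁_pos.trans_le hc₁
  have hL := (diskProfile_pos hε c 0).le
  have hcL := le_sq_diskProfile_zero hε c
  refine notMem_profileRegion_of_followsCotangentLift (differentiable_diskProfile hε c₁)
    (differentiable_diskProfile hε c₂) (differentiable_diskProfile hε c) (diskProfile_pos hε c₁)
    (diskProfile_pos hε c₂) (monotone_diskProfile hε hc₁) (monotone_diskProfile hε hc₂) ?_ hX hY
    (fun t ht hmem => hfollow t ht (sq_add_sq_lt_of_mem_profileRegion hε hc_pos.le hmem))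
    (mem_profileRegion_of_sq_add_sq_lt hc₁ hinit) (mem_profileRegion_of_sq_add_sq_lt hc₂ hfinal)
  have hmass₁ := integral_diskProfile_le hε hc₁_pos.le (hc₁.trans hcL) hL
  have hmass₂ := integral_diskProfile_le hε hc₂_pos.le (hc₂.trans hcL) hL
  have hmass := le_integral_diskProfile hε hc_pos.le hcL hL
  linarith

end Profiles

section HamiltonianFlow

lemma exists_isIntegralCurve_of_contDiff_of_hasCompactSupport {E : Type*} [NormedAddCommGroup E]
    [NormedSpace ℝ E] [CompleteSpace E] {V : ℝ × E → E} (hV : ContDiff ℝ 1 V)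
    (hsupp : HasCompactSupport V) (x₀ : E) :
    ∃ γ : ℝ → E, γ 0 = x₀ ∧ IsIntegralCurve γ fun t x => V (t, x) := by
  obtain ⟨K, hK⟩ := hV.lipschitzWith_of_hasCompactSupport hsupp one_ne_zero
  obtain ⟨C, hC⟩ := hV.continuous.bounded_above_of_compact_support hsupp
  exact exists_isIntegralCurve_of_lipschitzWith_of_norm_le (K := K * 1) (C := C.toNNReal)
    (fun t => hK.comp (LipschitzWith.prodMk_left t))
    (fun x => hV.continuous.comp (Continuous.prodMk_left x))
    (fun t x => (hC (t, x)).trans (le_coe_toNNReal C)) x₀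

section Gradient

variable {P E : Type*} [NormedAddCommGroup E] [InnerProductSpace ℝ E] [CompleteSpace E]
  {G : P × E → ℝ}

lemma contDiff_partial_gradient [NormedAddCommGroup P] [NormedSpace ℝ P] {m n : WithTop ℕ∞}
    (hG : ContDiff ℝ n G) (hmn : m + 1 ≤ n) :
    ContDiff ℝ m fun p : P × E => gradient (fun w => G (p.1, w)) p.2 := by
  have hG' : ContDiff ℝ n (Function.uncurry fun (p : P × E) (w : E) => G (p.1, w)) := by
    fun_prop
  exact (InnerProductSpace.toDual ℝ E).symm.contDiff.comp
    (hG'.fderiv contDiff_snd hmn)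

lemma gradient_eq_zero_of_notMem_tsupport [TopologicalSpace P] {p : P × E} (hp : p ∉ tsupport G) :
    gradient (fun w => G (p.1, w)) p.2 = 0 := by
  have hzero : (fun w => G (p.1, w)) =ᶠ[𝓝 p.2] fun _ => 0 :=
    (Continuous.prodMk_right p.1).continuousAt.eventually
      (notMem_tsupport_iff_eventuallyEq.1 hp)
  rw [gradient, hzero.fderiv_eq]
  simp

end Gradient

variable {ι : Type*} [Fintype ι]

/-- The Hamiltonian vector field `i ∇F` on `ℂ^ι`. -/
noncomputable def hamiltonianVectorField (F : EuclideanSpace ℂ ι → ℝ)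
    (z : EuclideanSpace ℂ ι) : EuclideanSpace ℂ ι :=
  Complex.I • gradient F z

/-- The map `φ`, starting at the identity, is the flow of the time-dependent Hamiltonian `G`. -/
structure IsHamiltonianFlow (G : ℝ × EuclideanSpace ℂ ι → ℝ)
    (φ : ℝ → EuclideanSpace ℂ ι → EuclideanSpace ℂ ι) : Prop where
  zero : φ 0 = id
  isIntegralCurve (z : EuclideanSpace ℂ ι) :
    IsIntegralCurve (φ · z) fun t => hamiltonianVectorField fun w => G (t, w)

lemma exists_isHamiltonianFlow {G : ℝ × EuclideanSpace ℂ ι → ℝ} (hG : ContDiff ℝ 2 G)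
    (hsupp : HasCompactSupport G) : ∃ φ, IsHamiltonianFlow G φ := by
  have hV : ContDiff ℝ 1 fun p : ℝ × EuclideanSpace ℂ ι =>
      hamiltonianVectorField (fun w => G (p.1, w)) p.2 :=
    (contDiff_partial_gradient hG one_add_one_eq_two.le).const_smul Complex.I
  have hV_supp : HasCompactSupport fun p : ℝ × EuclideanSpace ℂ ι =>
      hamiltonianVectorField (fun w => G (p.1, w)) p.2 :=
    .intro hsupp fun p hp => by
      rw [hamiltonianVectorField, gradient_eq_zero_of_notMem_tsupport hp, smul_zero]
  choose γ hγ₀ hγ using exists_isIntegralCurve_of_contDiff_of_hasCompactSupport hV hV_supp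
  exact ⟨fun t z => γ z t, funext hγ₀, hγ⟩

/-- The position of the `i`-th coordinate of `z` in the plane, together with the level of `z`
under `N`. -/
def planeAndLevel (N : EuclideanSpace ℂ ι → ℝ) (i : ι) (z : EuclideanSpace ℂ ι) : ℝ × ℝ × ℝ :=
  ((z i).re, (z i).im, N z)

variable {N : EuclideanSpace ℂ ι → ℝ} {i : ι}

lemma contDiff_planeAndLevel {n : WithTop ℕ∞} (hN : ContDiff ℝ n N) :
    ContDiff ℝ n (planeAndLevel N i) := by
  have hi : ContDiff ℝ n fun z : EuclideanSpace ℂ ι => z i :=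
    (PiLp.proj 2 (fun _ : ι => ℂ) i : _ →L[ℝ] ℂ).contDiff
  exact (Complex.reCLM.contDiff.comp hi).prodMk ((Complex.imCLM.contDiff.comp hi).prodMk hN)

lemma real_inner_single_left [DecidableEq ι] (c : ℂ) (v : EuclideanSpace ℂ ι) :
    inner ℝ (EuclideanSpace.single i c) v = inner ℝ c (v i) := by
  rw [PiLp.inner_apply, Finset.sum_eq_single i (fun j _ hj => by simp [hj]) (by simp)]
  simp

lemma real_inner_I_smul_single_add_smul [DecidableEq ι] {v : EuclideanSpace ℂ ι} (hv : v i = 0)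
    (c : ℂ) (r : ℝ) : inner ℝ v (Complex.I • (EuclideanSpace.single i c + r • v)) = 0 := by
  rw [PiLp.inner_apply]
  refine Finset.sum_eq_zero fun j _ => ?_
  rcases eq_or_ne j i with rfl | hj
  · rw [hv, inner_zero_left]
  · simp [hj, Complex.inner, mul_left_comm, mul_comm]

lemma hasGradientAt_comp_planeAndLevel [DecidableEq ι] {F : ℝ × ℝ × ℝ → ℝ}
    {F' : ℝ × ℝ × ℝ →L[ℝ] ℝ} {z : EuclideanSpace ℂ ι} (hN : DifferentiableAt ℝ N z)
    (hF : HasFDerivAt F F' (planeAndLevel N i z)) :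
    HasGradientAt (fun w => F (planeAndLevel N i w))
      (EuclideanSpace.single i ⟨F' (1, 0, 0), F' (0, 1, 0)⟩ + F' (0, 0, 1) • gradient N z) z := by
  have hi : HasFDerivAt (fun w : EuclideanSpace ℂ ι => w i)
      (PiLp.proj 2 (fun _ : ι => ℂ) i : _ →L[ℝ] ℂ) z :=
    (PiLp.proj 2 (fun _ : ι => ℂ) i : _ →L[ℝ] ℂ).hasFDerivAt
  have hchain := hF.comp z <| (Complex.reCLM.hasFDerivAt.comp z hi).prodMk
    ((Complex.imCLM.hasFDerivAt.comp z hi).prodMk hN.hasGradientAt.hasFDerivAt)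
  refine hasGradientAt_iff_hasFDerivAt.2 (hchain.congr_fderiv ?_)
  ext v
  have hlin (x y r : ℝ) :
      F' (x, y, r) = x * F' (1, 0, 0) + y * F' (0, 1, 0) + r * F' (0, 0, 1) := by
    simp only [← smul_eq_mul, ← map_smul, ← map_add]
    simp
  simp only [toDual_gradient, ContinuousLinearMap.comp_apply, ContinuousLinearMap.prod_apply,
    PiLp.proj_apply, Complex.reCLM_apply, Complex.imCLM_apply, hlin (v i).re, map_add, map_smul,
    add_apply, InnerProductSpace.toDual_apply_apply, real_inner_single_left, Complex.inner,
    Complex.mul_re, Complex.conj_re, Complex.conj_im, smul_apply, smul_eq_mul]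
  ring

lemma IsHamiltonianFlow.continuous {G : ℝ × EuclideanSpace ℂ ι → ℝ}
    {φ : ℝ → EuclideanSpace ℂ ι → EuclideanSpace ℂ ι} (hφ : IsHamiltonianFlow G φ)
    (z : EuclideanSpace ℂ ι) : Continuous (φ · z) :=
  continuous_iff_continuousAt.2 fun t => (hφ.isIntegralCurve z t).continuousAt

lemma hamiltonianVectorField_comp_planeAndLevel_apply {F : ℝ × ℝ × ℝ → ℝ}
    {F' : ℝ × ℝ × ℝ →L[ℝ] ℝ} {z : EuclideanSpace ℂ ι} (hN : DifferentiableAt ℝ N z)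
    (hNi : gradient N z i = 0) (hF : HasFDerivAt F F' (planeAndLevel N i z)) :
    hamiltonianVectorField (fun w => F (planeAndLevel N i w)) z i =
      ⟨-F' (0, 1, 0), F' (1, 0, 0)⟩ := by
  classical
  rw [hamiltonianVectorField, (hasGradientAt_comp_planeAndLevel hN hF).gradient]
  apply Complex.ext <;> simp [hNi]

lemma inner_gradient_hamiltonianVectorField_comp_planeAndLevel {F : ℝ × ℝ × ℝ → ℝ}
    {z : EuclideanSpace ℂ ι} (hN : DifferentiableAt ℝ N z) (hNi : gradient N z i = 0)
    (hF : DifferentiableAt ℝ F (planeAndLevel N i z)) :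
    inner ℝ (gradient N z) (hamiltonianVectorField (fun w => F (planeAndLevel N i w)) z) = 0 := by
  classical
  rw [hamiltonianVectorField, (hasGradientAt_comp_planeAndLevel hN hF.hasFDerivAt).gradient]
  exact real_inner_I_smul_single_add_smul hNi _ _

lemma IsHamiltonianFlow.level_eq {H : ℝ → ℝ × ℝ × ℝ → ℝ}
    {φ : ℝ → EuclideanSpace ℂ ι → EuclideanSpace ℂ ι}
    (hφ : IsHamiltonianFlow (fun p => H p.1 (planeAndLevel N i p.2)) φ)
    (hH : ∀ t, Differentiable ℝ (H t)) (hN : Differentiable ℝ N)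
    (hNi : ∀ z, gradient N z i = 0) (t : ℝ) (z : EuclideanSpace ℂ ι) : N (φ t z) = N z := by
  have hderiv (t : ℝ) : HasDerivAt (fun s => N (φ s z)) 0 t := by
    have hvel := inner_gradient_hamiltonianVectorField_comp_planeAndLevel (hN (φ t z)) (hNi _)
      (hH t _)
    have hcomp := (hN (φ t z)).hasGradientAt.hasFDerivAt.comp_hasDerivAt t (hφ.isIntegralCurve z t)
    rw [InnerProductSpace.toDual_apply_apply] at hcomp
    rwa [hvel] at hcomp
  have hconst := is_const_of_deriv_eq_zero (fun t => (hderiv t).differentiableAt)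
    (fun t => (hderiv t).deriv) t 0
  simpa only [hφ.zero, id_eq] using hconst

lemma IsHamiltonianFlow.followsCotangentLift {H : ℝ → ℝ × ℝ × ℝ → ℝ}
    {φ : ℝ → EuclideanSpace ℂ ι → EuclideanSpace ℂ ι}
    (hφ : IsHamiltonianFlow (fun p => H p.1 (planeAndLevel N i p.2)) φ) {t : ℝ}
    (hH : Differentiable ℝ (H t)) (hN : Differentiable ℝ N) {z : EuclideanSpace ℂ ι}
    (hNi : gradient N (φ t z) i = 0) {v : ℝ → ℝ} (hv : Differentiable ℝ v)
    (hHv : (fun p : ℝ × ℝ => H t (p.1, p.2, N (φ t z)))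
      =ᶠ[𝓝 ((φ t z i).re, (φ t z i).im)] fun p => -(p.2 * v p.1)) :
    FollowsCotangentLift v (fun s => (φ s z i).re) (fun s => (φ s z i).im) t := by
  set x := (φ t z i).re
  set y := (φ t z i).im
  have hH' := (hH (planeAndLevel N i (φ t z))).hasFDerivAt
  have hembed : HasFDerivAt (fun p : ℝ × ℝ => (p.1, p.2, N (φ t z)))
      ((ContinuousLinearMap.fst ℝ ℝ ℝ).prod ((ContinuousLinearMap.snd ℝ ℝ ℝ).prod 0)) (x, y) :=
    hasFDerivAt_fst.prodMk (hasFDerivAt_snd.prodMk (hasFDerivAt_const _ _))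
  have hplane := HasFDerivAt.comp (x, y) (g := H t) hH' hembed
  have hlift : HasFDerivAt (fun p : ℝ × ℝ => -(p.2 * v p.1)) _ (x, y) :=
    (hasFDerivAt_snd.mul ((hv x).hasDerivAt.hasFDerivAt.comp (x, y) hasFDerivAt_fst)).neg
  have hfderiv := hplane.unique (hlift.congr_of_eventuallyEq hHv)
  have hx : fderiv ℝ (H t) (planeAndLevel N i (φ t z)) (1, 0, 0) = -(y * deriv v x) := by
    simpa using DFunLike.congr_fun hfderiv (1, 0)
  have hy : fderiv ℝ (H t) (planeAndLevel N i (φ t z)) (0, 1, 0) = -v x := by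
    simpa using DFunLike.congr_fun hfderiv (0, 1)
  have hcoord := (PiLp.proj 2 (fun _ : ι => ℂ) i : _ →L[ℝ] ℂ).hasFDerivAt.comp_hasDerivAt t
    (hφ.isIntegralCurve z t)
  have hvel := hamiltonianVectorField_comp_planeAndLevel_apply (hN _) hNi hH'
  rw [hx, hy, neg_neg] at hvel
  exact ⟨(Complex.reCLM.hasFDerivAt.comp_hasDerivAt t hcoord).congr_deriv
      (congrArg Complex.re hvel),
    (Complex.imCLM.hasFDerivAt.comp_hasDerivAt t hcoord).congr_deriv (congrArg Complex.im hvel)⟩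

end HamiltonianFlow

section DisplacingHamiltonian

/-- On the level `ν`, the Hamiltonian of the cotangent lift of `diskDisplacingVelocity`, displacing
the disk of squared radius `r₁ ν` from the one of squared radius `r₂ ν`, cut off inside the disk of
squared radius `R ν`. -/
noncomputable def displacingHamiltonian (r₁ r₂ R : ℝ → ℝ) (ε t : ℝ) : ℝ × ℝ × ℝ → ℝ :=
  fun (x, y, ν) => -(smoothTransition ((R ν - (x ^ 2 + y ^ 2)) / ε - 1) *
    (y * diskDisplacingVelocity ε (r₁ ν) (r₂ ν) (R ν - 3 * ε) t x))

variable {r₁ r₂ R : ℝ → ℝ} {ε t x y ν : ℝ}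

lemma contDiff_displacingHamiltonian {n : ℕ∞} (hε : 0 < ε) (hr₁ : ContDiff ℝ n r₁)
    (hr₂ : ContDiff ℝ n r₂) (hR : ContDiff ℝ n R) :
    ContDiff ℝ n fun q : ℝ × ℝ × ℝ × ℝ => displacingHamiltonian r₁ r₂ R ε q.1 q.2 := by
  have hcutoff : ContDiff ℝ n fun q : ℝ × ℝ × ℝ × ℝ =>
      smoothTransition ((R q.2.2.2 - (q.2.1 ^ 2 + q.2.2.1 ^ 2)) / ε - 1) :=
    smoothTransition.contDiff.comp (by fun_prop)
  have hvelocity : ContDiff ℝ n fun q : ℝ × ℝ × ℝ × ℝ =>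
      diskDisplacingVelocity ε (r₁ q.2.2.2) (r₂ q.2.2.2) (R q.2.2.2 - 3 * ε) q.1 q.2.1 :=
    contDiff_diskDisplacingVelocity hε (by fun_prop) (by fun_prop) (by fun_prop) (by fun_prop)
      (by fun_prop)
  have hy : ContDiff ℝ n fun q : ℝ × ℝ × ℝ × ℝ => q.2.2.1 := by fun_prop
  exact (hcutoff.mul (hy.mul hvelocity)).neg

lemma displacingHamiltonian_of_notMem (ht : t ∉ Icc (0 : ℝ) 1) (p : ℝ × ℝ × ℝ) :
    displacingHamiltonian r₁ r₂ R ε t p = 0 := by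
  simp only [displacingHamiltonian, diskDisplacingVelocity, displacingVelocity_of_notMem ht,
    mul_zero, neg_zero]

lemma displacingHamiltonian_of_le (hε : 0 < ε) (hxy : R ν ≤ x ^ 2 + y ^ 2 + ε) :
    displacingHamiltonian r₁ r₂ R ε t (x, y, ν) = 0 := by
  have hcutoff : (R ν - (x ^ 2 + y ^ 2)) / ε - 1 ≤ 0 :=
    sub_nonpos.2 ((div_le_one hε).2 (by linarith))
  simp only [displacingHamiltonian, smoothTransition.zero_of_nonpos hcutoff, zero_mul, neg_zero]

lemma displacingHamiltonian_of_lt (hε : 0 < ε) (hxy : x ^ 2 + y ^ 2 < R ν - 2 * ε) :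
    displacingHamiltonian r₁ r₂ R ε t (x, y, ν) =
      -(y * diskDisplacingVelocity ε (r₁ ν) (r₂ ν) (R ν - 3 * ε) t x) := by
  have hcutoff : 1 ≤ (R ν - (x ^ 2 + y ^ 2)) / ε - 1 :=
    le_sub_iff_add_le.2 ((le_div_iff₀ hε).2 (by linarith))
  simp only [displacingHamiltonian, smoothTransition.one_of_one_le hcutoff, one_mul]

variable {ι : Type*} [Fintype ι] {N : EuclideanSpace ℂ ι → ℝ} {i : ι}

lemma IsHamiltonianFlow.le_sq_norm_of_displacingHamiltonian
    {φ : ℝ → EuclideanSpace ℂ ι → EuclideanSpace ℂ ι}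
    (hφ : IsHamiltonianFlow
      (fun p => displacingHamiltonian r₁ r₂ R ε p.1 (planeAndLevel N i p.2)) φ)
    (hε : 0 < ε) (hN : Differentiable ℝ N) (hNi : ∀ z, gradient N z i = 0)
    (hr₁ : ContDiff ℝ 1 r₁) (hr₂ : ContDiff ℝ 1 r₂) (hR : ContDiff ℝ 1 R)
    {z : EuclideanSpace ℂ ι} (hr₁R : r₁ (N z) ≤ R (N z) - 3 * ε)
    (hr₂R : r₂ (N z) ≤ R (N z) - 3 * ε)
    (hgap : π / 2 * (r₁ (N z) + r₂ (N z)) + 4 * diskProfile ε (R (N z) - 3 * ε) 0 * √(ε / 2) ≤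
      π / 2 * (R (N z) - 3 * ε)) (hz : ‖z i‖ ^ 2 < r₁ (N z)) :
    r₂ (N z) ≤ ‖φ 1 z i‖ ^ 2 := by
  have hH (t : ℝ) : Differentiable ℝ (displacingHamiltonian r₁ r₂ R ε t) :=
    ((contDiff_displacingHamiltonian hε hr₁ hr₂ hR).comp
      (contDiff_prodMk_right t)).differentiable one_ne_zero
  have hlevel (t : ℝ) : N (φ t z) = N z := hφ.level_eq hH hN hNi t z
  have hcoord : Continuous fun t => φ t z i :=
    (PiLp.continuous_apply 2 (fun _ : ι => ℂ) i).comp (hφ.continuous z)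
  have hv (t : ℝ) : Differentiable ℝ
      (diskDisplacingVelocity ε (r₁ (N z)) (r₂ (N z)) (R (N z) - 3 * ε) t) :=
    (contDiff_diskDisplacingVelocity (n := 1) hε contDiff_const contDiff_const contDiff_const
      contDiff_const contDiff_id).differentiable one_ne_zero
  simp only [Complex.sq_norm, Complex.normSq_apply, ← pow_two] at hz ⊢
  refine le_sq_add_sq_of_followsCotangentLift hε hr₁R hr₂R hgap
    (Complex.continuous_re.comp hcoord) (Complex.continuous_im.comp hcoord)
    (fun t _ ht => hφ.followsCotangentLift (hH t) hN (hNi _) (hv t) ?_) ?_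
  · rw [hlevel]
    have hlt : ∀ᶠ p in 𝓝 ((φ t z i).re, (φ t z i).im), p.1 ^ 2 + p.2 ^ 2 < R (N z) - 2 * ε :=
      (by fun_prop : Continuous fun p : ℝ × ℝ => p.1 ^ 2 + p.2 ^ 2).continuousAt.eventually_lt_const
        (ht.trans_eq (by ring))
    exact hlt.mono fun p hp => displacingHamiltonian_of_lt hε hp
  · simpa only [Function.comp_apply, hφ.zero, id_eq] using hz

theorem exists_isHamiltonianFlow_disjoint {μ B : ℝ} (hN : ContDiff ℝ (⊤ : ℕ∞) N)
    (hNi : ∀ z, gradient N z i = 0) (hr₁ : ContDiff ℝ (⊤ : ℕ∞) r₁)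
    (hr₂ : ContDiff ℝ (⊤ : ℕ∞) r₂) (hR : ContDiff ℝ (⊤ : ℕ∞) R) (hμ : 0 < μ)
    (hgap : ∀ z, r₁ (N z) + r₂ (N z) + μ ≤ R (N z)) (hRB : ∀ z, R (N z) ≤ B)
    (hcompact : ∀ ε > 0, IsCompact {z : EuclideanSpace ℂ ι | ‖z i‖ ^ 2 + ε ≤ R (N z)}) :
    ∃ G K φ, ContDiff ℝ (⊤ : ℕ∞) G ∧ IsCompact K ∧ K ⊆ {z | ‖z i‖ ^ 2 < R (N z)} ∧
      (∀ t, ∀ z ∉ K, G (t, z) = 0) ∧ IsHamiltonianFlow G φ ∧ (∀ t z, N (φ t z) = N z) ∧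
      Disjoint (φ 1 '' {z | ‖z i‖ ^ 2 < r₁ (N z)}) {z | ‖z i‖ ^ 2 < r₂ (N z)} := by
  obtain ⟨ε, hε, hscale⟩ := exists_smoothing_scale B hμ
  have hH := contDiff_displacingHamiltonian hε hr₁ hr₂ hR
  set G : ℝ × EuclideanSpace ℂ ι → ℝ := fun p =>
    displacingHamiltonian r₁ r₂ R ε p.1 (planeAndLevel N i p.2)
  have hG : ContDiff ℝ (⊤ : ℕ∞) G :=
    hH.comp (contDiff_fst.prodMk ((contDiff_planeAndLevel hN).comp contDiff_snd))
  set K : Set (EuclideanSpace ℂ ι) := {z | ‖z i‖ ^ 2 + ε ≤ R (N z)}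
  have hGK (t : ℝ) (z : EuclideanSpace ℂ ι) (hz : z ∉ K) : G (t, z) = 0 := by
    have hlt : R (N z) < ‖z i‖ ^ 2 + ε := not_le.1 hz
    rw [Complex.sq_norm, Complex.normSq_apply, ← pow_two, ← pow_two] at hlt
    exact displacingHamiltonian_of_le hε hlt.le
  have hsupp : HasCompactSupport G :=
    .intro (isCompact_Icc.prod (hcompact ε hε)) fun p hp => by
      by_cases ht : p.1 ∈ Icc (0 : ℝ) 1
      · exact hGK p.1 p.2 fun hz => hp ⟨ht, hz⟩
      · exact displacingHamiltonian_of_notMem ht _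
  obtain ⟨φ, hφ⟩ := exists_isHamiltonianFlow (contDiff_infty.1 hG 2) hsupp
  have hN' : Differentiable ℝ N := hN.differentiable (by simp)
  have hlevel := hφ.level_eq
    (fun t => (hH.comp (contDiff_prodMk_right t)).differentiable (by simp)) hN' hNi
  refine ⟨G, K, φ, hG, hcompact ε hε, fun z hz => (lt_add_of_pos_right _ hε).trans_le hz, hGK, hφ,
    hlevel, disjoint_left.2 ?_⟩
  rintro _ ⟨z, hz₁, rfl⟩ hz₂
  replace hz₂ : ‖φ 1 z i‖ ^ 2 < r₂ (N z) := hlevel 1 z ▸ hz₂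
  obtain ⟨hr₁R, hr₂R, harea⟩ := hscale _ _ _ (hz₁.trans_le' (by positivity))
    (hz₂.trans_le' (by positivity)) (hgap z) (hRB z)
  exact hz₂.not_ge <| hφ.le_sq_norm_of_displacingHamiltonian hε hN' hNi
    (hr₁.of_le (mod_cast le_top)) (hr₂.of_le (mod_cast le_top)) (hR.of_le (mod_cast le_top))
    hr₁R hr₂R harea hz₁

end DisplacingHamiltonian

section WeightedNormSq

variable {ι : Type*} [Fintype ι]

/-- The quadratic form `∑ⱼ wⱼ |zⱼ|²` on `ℂ^ι`. -/
noncomputable def weightedNormSq (w : ι → ℝ) (z : EuclideanSpace ℂ ι) : ℝ :=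
  ∑ j, w j * ‖z j‖ ^ 2

variable {w : ι → ℝ}

lemma contDiff_weightedNormSq {n : WithTop ℕ∞} : ContDiff ℝ n (weightedNormSq w) :=
  ContDiff.sum fun j _ => contDiff_const.mul
    ((PiLp.proj 2 (fun _ : ι => ℂ) j : _ →L[ℝ] ℂ).contDiff.norm_sq ℝ)

lemma hasGradientAt_weightedNormSq (z : EuclideanSpace ℂ ι) :
    HasGradientAt (weightedNormSq w) (WithLp.toLp 2 fun j => (2 * w j) • z j) z := by
  have hterm (j : ι) : HasFDerivAt (fun z : EuclideanSpace ℂ ι => w j * ‖z j‖ ^ 2) _ z :=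
    ((PiLp.proj 2 (fun _ : ι => ℂ) j : _ →L[ℝ] ℂ).hasFDerivAt.norm_sq).const_mul (w j)
  refine hasGradientAt_iff_hasFDerivAt.2
    ((HasFDerivAt.fun_sum fun j _ => hterm j).congr_fderiv ?_)
  ext v
  simp [PiLp.inner_apply, mul_assoc, mul_left_comm]

lemma gradient_weightedNormSq_apply_eq_zero {i : ι} (hwi : w i = 0) (z : EuclideanSpace ℂ ι) :
    gradient (weightedNormSq w) z i = 0 := by
  rw [(hasGradientAt_weightedNormSq z).gradient]
  simp [hwi]

lemma isCompact_weightedNormSq_le (hw : ∀ j, 0 < w j) (c : ℝ) :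
    IsCompact {z : EuclideanSpace ℂ ι | weightedNormSq w z ≤ c} := by
  have hclosed : IsClosed {z : EuclideanSpace ℂ ι | weightedNormSq w z ≤ c} :=
    isClosed_le (contDiff_weightedNormSq (n := 0)).continuous continuous_const
  refine Metric.isCompact_of_isClosed_isBounded hclosed
    (isBounded_iff_forall_norm_le.2 ⟨√(∑ j, c / w j), fun z hz => ?_⟩)
  rw [EuclideanSpace.norm_eq]
  refine sqrt_le_sqrt (Finset.sum_le_sum fun j _ => (le_div_iff₀' (hw j)).2 ?_)
  exact (Finset.single_le_sum (fun k _ => mul_nonneg (hw k).le (sq_nonneg ‖z k‖))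
    (Finset.mem_univ j)).trans hz

lemma weightedNormSq_update_zero [DecidableEq ι] (i : ι) (z : EuclideanSpace ℂ ι) :
    weightedNormSq (Function.update w i 0) z = ∑ j ∈ Finset.univ.erase i, w j * ‖z j‖ ^ 2 := by
  rw [weightedNormSq, ← Finset.add_sum_erase _ _ (Finset.mem_univ i), Function.update_self,
    zero_mul, zero_add]
  exact Finset.sum_congr rfl fun j hj => by
    rw [Function.update_of_ne (Finset.ne_of_mem_erase hj)]

lemma weightedNormSq_update_zero_nonneg [DecidableEq ι] (hw : ∀ j, 0 ≤ w j) (i : ι)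
    (z : EuclideanSpace ℂ ι) : 0 ≤ weightedNormSq (Function.update w i 0) z := by
  rw [weightedNormSq_update_zero]
  exact Finset.sum_nonneg fun j _ => mul_nonneg (hw j) (sq_nonneg _)

lemma isCompact_sq_norm_add_le [DecidableEq ι] (hw : ∀ j, 0 < w j) (i : ι) (α ε : ℝ) :
    IsCompact {z : EuclideanSpace ℂ ι |
      ‖z i‖ ^ 2 + ε ≤ (α - weightedNormSq (Function.update w i 0) z) / w i} := by
  convert isCompact_weightedNormSq_le hw (α - w i * ε) using 3 with z
  rw [le_div_iff₀' (hw i), weightedNormSq_update_zero, weightedNormSq,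
    ← Finset.add_sum_erase _ _ (Finset.mem_univ i)]
  constructor <;> intro h <;> linarith

end WeightedNormSq

lemma div_add_div_add_div_le {a b c α s ν : ℝ} (ha : 0 < a) (hb : 0 < b) (hab : a + b = c)
    (hν : 0 ≤ ν) :
    (s - ν) / (π * a) + s / (π * b) + (α - s * c ^ 2 / (a * b)) / (π * c) ≤ (α - ν) / (π * c) := by
  rw [← hab]
  have hslack : (α - ν) / (π * (a + b)) - ((s - ν) / (π * a) + s / (π * b) +
      (α - s * (a + b) ^ 2 / (a * b)) / (π * (a + b))) = ν * b / (π * a * (a + b)) := by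
    field_simp
    ring
  exact sub_nonneg.1 (hslack ▸ by positivity)

lemma mul_add_lt_iff_lt_div {c r ν α : ℝ} (hc : 0 < c) : c * r + ν < α ↔ r < (α - ν) / c := by
  rw [lt_div_iff₀' hc, lt_sub_iff_add_lt]

/-- in `ℂⁿ` (`n ≥ 2`) with positive reals `k₁, …, kₙ`, setting
`N z = π Σ_{j ≥ 2} kⱼ|zⱼ|²`, positive `a, b` with `a + b = k₁`, and `α, s > 0` with
`s k₁² < a b α`, on the open ellipsoid `E = {π k₁ |z₁|² + N z < α}` there are a smooth
time-dependent Hamiltonian `G` vanishing (for all times) outside a compact `K ⊆ E` and a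
Hamiltonian flow `b` of `G`, preserving `N`, whose time-one map moves
`{z ∈ E : π a |z₁|² + N z < s}` off `{z ∈ E : π b |z₁|² < s}`. -/
theorem stmt_7 (n : ℕ) [NeZero n] (hn : 2 ≤ n) (k : Fin n → ℝ) (hk : ∀ j, 0 < k j)
    (N : EuclideanSpace ℂ (Fin n) → ℝ)
    (hN : ∀ z, N z = π * ∑ j ∈ Finset.univ.erase (0 : Fin n), k j * ‖z j‖ ^ 2)
    (a b : ℝ) (ha : 0 < a) (hb : 0 < b) (hab : a + b = k 0)
    (α s : ℝ) (hα : 0 < α) (hs : 0 < s) (hsk : s * k 0 ^ 2 < a * b * α) :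
    ∃ (G : ℝ × EuclideanSpace ℂ (Fin n) → ℝ)
      (K : Set (EuclideanSpace ℂ (Fin n)))
      (bFlow : ℝ → EuclideanSpace ℂ (Fin n) → EuclideanSpace ℂ (Fin n)),
      ContDiff ℝ (⊤ : ℕ∞) G ∧ IsCompact K ∧
      K ⊆ {z : EuclideanSpace ℂ (Fin n) | π * k 0 * ‖z 0‖ ^ 2 + N z < α} ∧
      (∀ (t : ℝ) (z : EuclideanSpace ℂ (Fin n)), z ∉ K → G (t, z) = 0) ∧
      bFlow 0 = id ∧
      (∀ (z : EuclideanSpace ℂ (Fin n)) (t : ℝ),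
        HasDerivAt (fun s' => bFlow s' z) (Complex.I • gradient (fun w => G (t, w)) (bFlow t z)) t) ∧
      (∀ (t : ℝ) (z : EuclideanSpace ℂ (Fin n)), N (bFlow t z) = N z) ∧
      Disjoint
        (bFlow 1 '' {z : EuclideanSpace ℂ (Fin n) |
          π * k 0 * ‖z 0‖ ^ 2 + N z < α ∧ π * a * ‖z 0‖ ^ 2 + N z < s})
        {z : EuclideanSpace ℂ (Fin n) |
          π * k 0 * ‖z 0‖ ^ 2 + N z < α ∧ π * b * ‖z 0‖ ^ 2 < s} := by
  obtain rfl : N = weightedNormSq (Function.update (fun j => π * k j) 0 0) := by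
    ext z
    simp only [hN, weightedNormSq_update_zero, Finset.mul_sum, mul_assoc]
  set N := weightedNormSq (Function.update (fun j => π * k j) 0 0)
  have hw (j : Fin n) : 0 < π * k j := mul_pos pi_pos (hk j)
  have hN_nonneg : ∀ z, 0 ≤ N z := weightedNormSq_update_zero_nonneg (fun j => (hw j).le) 0
  have hμ : 0 < (α - s * k 0 ^ 2 / (a * b)) / (π * k 0) :=
    div_pos (sub_pos.2 ((div_lt_iff₀' (mul_pos ha hb)).2 hsk)) (hw 0)
  obtain ⟨G, K, φ, hG, hK, hKE, hGK, hφ, hNφ, hdisj⟩ := exists_isHamiltonianFlow_disjoint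
    (N := N) (i := 0) (r₁ := fun ν => (s - ν) / (π * a)) (r₂ := fun _ => s / (π * b))
    (R := fun ν => (α - ν) / (π * k 0)) (B := α / (π * k 0)) contDiff_weightedNormSq
    (gradient_weightedNormSq_apply_eq_zero (Function.update_self 0 0 _)) (by fun_prop)
    (by fun_prop) (by fun_prop) hμ (fun z => div_add_div_add_div_le ha hb hab (hN_nonneg z))
    (fun z => div_le_div_of_nonneg_right (sub_le_self α (hN_nonneg z)) (hw 0).le)
    fun ε _ => isCompact_sq_norm_add_le hw 0 α ε
  refine ⟨G, K, φ, hG, hK, fun z hz => (mul_add_lt_iff_lt_div (hw 0)).2 (hKE hz), hGK, hφ.zero,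
    hφ.isIntegralCurve, hNφ, hdisj.mono (image_mono fun z hz => ?_) fun z hz => ?_⟩
  · exact (mul_add_lt_iff_lt_div (mul_pos pi_pos ha)).1 hz.2
  · exact (lt_div_iff₀' (mul_pos pi_pos hb)).2 hz.2
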